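/- arXiv:1801.00120 — 2 statements merged into one kernel-verified Lean document; each statement's English description precedes it below -/
import Mathlib

section
/- Let H ∈ (1/2, 1). There exists a constant C depending only on H such that for every integer n ≥ 1, sup_{τ ∈ [0,1], 1 ≤ k ≤ n} | ∫₀^τ ( n ∫_{(k−1)/n}^{k/n} |r−s|^{2H−2} dr − |(k−1)/n − s|^{2H−2} ) ds | ≤ C · n^{1−2H}. In particular this supremum tends to 0 as n → ∞. -/
/-!
Integrating in `s` first, the quantity to bound is the difference between the average over `[a, b]`
and the value at `a` of the function `G r = ∫ s in c..d, f (r - s)`, with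
`f t = |t| ^ (2 * H - 2)`. Now `G r - G a` is the difference of two integrals of `f` over intervals
of length `r - a ≤ b - a`, because translating the window of integration only changes its two ends.
Each of them is `O((b - a) ^ (2 * H - 1))`: the primitive of `f` is built from `x⁺ ^ (2 * H - 1)`
and `x⁻ ^ (2 * H - 1)`, and `t ↦ t ^ q` is `q`-Hölder on the half-line for `0 < q ≤ 1`.
-/

open MeasureTheory Set Filter Topology

section RealPowers

lemma abs_rpow_sub_rpow_le_abs_sub_rpow {p x y : ℝ} (hx : 0 ≤ x) (hy : 0 ≤ y) (hp : 0 ≤ p)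
    (hp1 : p ≤ 1) : |x ^ p - y ^ p| ≤ |x - y| ^ p := by
  wlog hyx : y ≤ x generalizing x y
  · rw [abs_sub_comm, abs_sub_comm x y]
    exact this hy hx (le_of_not_ge hyx)
  have subadditive := Real.rpow_add_le_add_rpow (sub_nonneg.2 hyx) hy hp hp1
  rw [sub_add_cancel] at subadditive
  rw [abs_of_nonneg (sub_nonneg.2 hyx),
    abs_of_nonneg (sub_nonneg.2 (Real.rpow_le_rpow hy hyx hp))]
  linarith

variable {p : ℝ}

lemma intervalIntegrable_abs_rpow (hp : -1 < p) (a b : ℝ) :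
    IntervalIntegrable (fun x : ℝ => |x| ^ p) volume a b := by
  refine intervalIntegrable_of_even (fun x => by rw [abs_neg]) (fun x hx => ?_)
  refine (intervalIntegral.intervalIntegrable_rpow' hp).congr fun y hy => ?_
  rw [uIoc_of_le hx.le] at hy
  simp only [abs_of_pos hy.1]

lemma integral_zero_abs_rpow (hp : -1 < p) (x : ℝ) :
    ∫ t in (0 : ℝ)..x, |t| ^ p = (x⁺ ^ (p + 1) - x⁻ ^ (p + 1)) / (p + 1) := by
  have hp0 : p + 1 ≠ 0 := by linarith
  have integral_of_nonneg {y : ℝ} (hy : 0 ≤ y) :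
      ∫ t in (0 : ℝ)..y, |t| ^ p = y ^ (p + 1) / (p + 1) := by
    rw [intervalIntegral.integral_congr (g := fun t => t ^ p), integral_rpow (Or.inl hp),
      Real.zero_rpow hp0, sub_zero]
    intro t ht
    rw [uIcc_of_le hy] at ht
    simp only [abs_of_nonneg ht.1]
  rcases le_total 0 x with hx | hx
  · rw [integral_of_nonneg hx, posPart_of_nonneg hx, negPart_of_nonneg hx, Real.zero_rpow hp0,
      sub_zero]
  · have reflect : ∫ t in (0 : ℝ)..x, |t| ^ p = -∫ t in (0 : ℝ)..(-x), |t| ^ p := by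
      rw [← neg_zero, ← intervalIntegral.integral_comp_neg, ← intervalIntegral.integral_symm]
      simp only [abs_neg, neg_zero]
    rw [reflect, integral_of_nonneg (neg_nonneg.2 hx), posPart_of_nonpos hx, negPart_of_nonpos hx,
      Real.zero_rpow hp0, zero_sub, neg_div]

lemma abs_integral_abs_rpow_le (hp : -1 < p) (hp0 : p ≤ 0) (x y : ℝ) :
    |∫ t in x..y, |t| ^ p| ≤ 2 / (p + 1) * |y - x| ^ (p + 1) := by
  have hq : 0 < p + 1 := by linarith
  have posPart_bound (u v : ℝ) : |u⁺ ^ (p + 1) - v⁺ ^ (p + 1)| ≤ |u - v| ^ (p + 1) :=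
    (abs_rpow_sub_rpow_le_abs_sub_rpow (posPart_nonneg u) (posPart_nonneg v) hq.le
      (by linarith)).trans
      (Real.rpow_le_rpow (abs_nonneg _) (abs_max_sub_max_le_abs u v 0) hq.le)
  have negPart_bound : |x⁻ ^ (p + 1) - y⁻ ^ (p + 1)| ≤ |y - x| ^ (p + 1) := by
    simpa only [posPart_neg, neg_sub_neg] using posPart_bound (-x) (-y)
  have hint := intervalIntegrable_abs_rpow hp
  have integral_eq : ∫ t in x..y, |t| ^ p
      = ((y⁺ ^ (p + 1) - x⁺ ^ (p + 1)) + (x⁻ ^ (p + 1) - y⁻ ^ (p + 1))) / (p + 1) := by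
    rw [← intervalIntegral.integral_interval_sub_left (hint 0 y) (hint 0 x),
      integral_zero_abs_rpow hp, integral_zero_abs_rpow hp]
    ring
  calc |∫ t in x..y, |t| ^ p|
      = |(y⁺ ^ (p + 1) - x⁺ ^ (p + 1)) + (x⁻ ^ (p + 1) - y⁻ ^ (p + 1))| / (p + 1) := by
        rw [integral_eq, abs_div, abs_of_pos hq]
    _ ≤ (|y - x| ^ (p + 1) + |y - x| ^ (p + 1)) / (p + 1) := by
        gcongr
        exact (abs_add_le _ _).trans (add_le_add (posPart_bound y x) negPart_bound)
    _ = 2 / (p + 1) * |y - x| ^ (p + 1) := by ring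

end RealPowers

section TranslatedKernels

variable {E : Type*} [NormedAddCommGroup E] [NormedSpace ℝ E]

lemma norm_intervalAverage_sub_le [CompleteSpace E] {g : ℝ → E} {a b K : ℝ} {v : E} (hab : a < b)
    (hg : IntervalIntegrable g volume a b) (hK : ∀ r ∈ Ioc a b, ‖g r - v‖ ≤ K) :
    ‖(⨍ r in a..b, g r) - v‖ ≤ K := by
  rw [uIoc_of_le hab.le, ← mem_closedBall_iff_norm]
  refine (convex_closedBall v K).set_average_mem Metric.isClosed_closedBall ?_ ?_ ?_ hg.1
  · simp [hab]
  · simp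
  · filter_upwards [ae_restrict_mem measurableSet_Ioc] with r hr
    exact mem_closedBall_iff_norm.2 (hK r hr)

variable {f : ℝ → E} (hf : ∀ x y, IntervalIntegrable f volume x y)
include hf

lemma integral_comp_sub_right_eq_sub_primitive (a b s : ℝ) :
    ∫ r in a..b, f (r - s) = (∫ t in (0 : ℝ)..(b - s), f t) - ∫ t in (0 : ℝ)..(a - s), f t := by
  rw [intervalIntegral.integral_comp_sub_right,
    intervalIntegral.integral_interval_sub_left (hf _ _) (hf _ _)]

lemma integral_comp_sub_left_eq_sub_primitive (c d r : ℝ) :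
    ∫ s in c..d, f (r - s) = (∫ t in (0 : ℝ)..(r - c), f t) - ∫ t in (0 : ℝ)..(r - d), f t := by
  rw [intervalIntegral.integral_comp_sub_left,
    intervalIntegral.integral_interval_sub_left (hf _ _) (hf _ _)]

lemma continuous_integral_comp_sub_right (a b : ℝ) :
    Continuous fun s => ∫ r in a..b, f (r - s) := by
  have hF := intervalIntegral.continuous_primitive hf 0
  simp only [integral_comp_sub_right_eq_sub_primitive hf]
  fun_prop

lemma continuous_integral_comp_sub_left (c d : ℝ) :
    Continuous fun r => ∫ s in c..d, f (r - s) := by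
  have hF := intervalIntegral.continuous_primitive hf 0
  simp only [integral_comp_sub_left_eq_sub_primitive hf]
  fun_prop

-- Substitution in a primitive of `f` replaces integrability of `(s, r) ↦ f (r - s)` on the product.
lemma integral_integral_comp_sub_swap (a b c d : ℝ) :
    ∫ s in c..d, ∫ r in a..b, f (r - s) = ∫ r in a..b, ∫ s in c..d, f (r - s) := by
  set F : ℝ → E := fun x => ∫ t in (0 : ℝ)..x, f t with hF_def
  have hF : Continuous F := intervalIntegral.continuous_primitive hf 0
  have hFint (x y : ℝ) : IntervalIntegrable F volume x y := hF.intervalIntegrable x y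
  have hFsub (x u v : ℝ) : IntervalIntegrable (fun s => F (x - s)) volume u v :=
    (hF.comp (continuous_const.sub continuous_id)).intervalIntegrable u v
  have hFadd (x u v : ℝ) : IntervalIntegrable (fun s => F (s - x)) volume u v :=
    (hF.comp (continuous_id.sub continuous_const)).intervalIntegrable u v
  calc ∫ s in c..d, ∫ r in a..b, f (r - s)
      = ∫ s in c..d, (F (b - s) - F (a - s)) := by
        simp only [integral_comp_sub_right_eq_sub_primitive hf, hF_def]
    _ = (∫ x in (b - d)..(b - c), F x) - ∫ x in (a - d)..(a - c), F x := by
        rw [intervalIntegral.integral_sub (hFsub b c d) (hFsub a c d),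
          intervalIntegral.integral_comp_sub_left, intervalIntegral.integral_comp_sub_left]
    _ = (∫ x in (a - c)..(b - c), F x) - ∫ x in (a - d)..(b - d), F x :=
        intervalIntegral.integral_interval_sub_interval_comm' (hFint _ _) (hFint _ _) (hFint _ _)
    _ = ∫ r in a..b, (F (r - c) - F (r - d)) := by
        rw [intervalIntegral.integral_sub (hFadd c a b) (hFadd d a b),
          intervalIntegral.integral_comp_sub_right, intervalIntegral.integral_comp_sub_right]
    _ = ∫ r in a..b, ∫ s in c..d, f (r - s) := by
        simp only [integral_comp_sub_left_eq_sub_primitive hf, hF_def]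

variable {a b K : ℝ} (hK : ∀ x y, |y - x| ≤ b - a → ‖∫ t in x..y, f t‖ ≤ K)
include hK

lemma norm_integral_comp_sub_sub_le {r : ℝ} (hr : r ∈ Icc a b) (c d : ℝ) :
    ‖(∫ s in c..d, f (r - s)) - ∫ s in c..d, f (a - s)‖ ≤ 2 * K := by
  have end_bound (x : ℝ) : ‖∫ t in (a - x)..(r - x), f t‖ ≤ K := by
    refine hK _ _ ?_
    rw [sub_sub_sub_cancel_right, abs_of_nonneg (sub_nonneg.2 hr.1)]
    linarith [hr.2]
  rw [intervalIntegral.integral_comp_sub_left, intervalIntegral.integral_comp_sub_left,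
    intervalIntegral.integral_interval_sub_interval_comm' (hf _ _) (hf _ _) (hf _ _), two_mul]
  exact norm_sub_le_of_le (end_bound c) (end_bound d)

lemma norm_integral_intervalAverage_comp_sub_sub_le [CompleteSpace E] (hab : a < b) (c d : ℝ) :
    ‖∫ s in c..d, ((⨍ r in a..b, f (r - s)) - f (a - s))‖ ≤ 2 * K := by
  have average_swap : ∫ s in c..d, ((⨍ r in a..b, f (r - s)) - f (a - s))
      = (⨍ r in a..b, ∫ s in c..d, f (r - s)) - ∫ s in c..d, f (a - s) := by
    simp only [interval_average_eq]
    rw [intervalIntegral.integral_sub, intervalIntegral.integral_smul,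
      integral_integral_comp_sub_swap hf]
    · exact ((continuous_integral_comp_sub_right hf a b).const_smul _).intervalIntegrable _ _
    · simpa using (hf (a - c) (a - d)).comp_sub_left a
  rw [average_swap]
  exact norm_intervalAverage_sub_le hab
    ((continuous_integral_comp_sub_left hf c d).intervalIntegrable a b) fun r hr =>
      norm_integral_comp_sub_sub_le hf hK (Ioc_subset_Icc_self hr) c d

end TranslatedKernels

lemma abs_integral_average_abs_rpow_sub_le {p a b : ℝ} (hp : -1 < p) (hp0 : p ≤ 0) (hab : a < b)
    (c d : ℝ) :
    |∫ s in c..d, ((b - a)⁻¹ * (∫ r in a..b, |r - s| ^ p) - |a - s| ^ p)|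
      ≤ 4 / (p + 1) * (b - a) ^ (p + 1) := by
  have hq : 0 < p + 1 := by linarith
  have short_interval_bound (x y : ℝ) (hxy : |y - x| ≤ b - a) :
      ‖∫ t in x..y, |t| ^ p‖ ≤ 2 / (p + 1) * (b - a) ^ (p + 1) := by
    refine (abs_integral_abs_rpow_le hp hp0 x y).trans ?_
    gcongr
  have h := norm_integral_intervalAverage_comp_sub_sub_le (intervalIntegrable_abs_rpow hp)
    short_interval_bound hab c d
  simp only [interval_average_eq, smul_eq_mul, Real.norm_eq_abs] at h
  exact h.trans_eq (by ring)

theorem stmt17_general {H : ℝ} (hH : H ∈ Ioc (1 / 2 : ℝ) 1) :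
    ∃ C : ℝ, 0 < C ∧
      (∀ m : ℝ, 0 < m → ∀ a b : ℝ, b - a = m⁻¹ → ∀ c d : ℝ,
        |∫ s in c..d, (m * (∫ r in a..b, |r - s| ^ (2 * H - 2)) - |a - s| ^ (2 * H - 2))|
          ≤ C * m ^ (1 - 2 * H)) ∧
      (∀ ε > (0 : ℝ), ∃ M : ℝ, ∀ m : ℝ, M ≤ m → 0 < m → ∀ a b : ℝ, b - a = m⁻¹ → ∀ c d : ℝ,
        |∫ s in c..d, (m * (∫ r in a..b, |r - s| ^ (2 * H - 2)) - |a - s| ^ (2 * H - 2))|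
          ≤ ε) := by
  have hq : 0 < 2 * H - 1 := by linarith [hH.1]
  have bound (m : ℝ) (hm : 0 < m) (a b : ℝ) (hab : b - a = m⁻¹) (c d : ℝ) :
      |∫ s in c..d, (m * (∫ r in a..b, |r - s| ^ (2 * H - 2)) - |a - s| ^ (2 * H - 2))|
        ≤ 4 / (2 * H - 1) * m ^ (1 - 2 * H) := by
    have h := abs_integral_average_abs_rpow_sub_le (p := 2 * H - 2) (by linarith)
      (by linarith [hH.2]) (sub_pos.1 (hab ▸ inv_pos.2 hm)) c d
    rwa [hab, inv_inv, Real.inv_rpow hm.le, ← Real.rpow_neg hm.le,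
      show 2 * H - 2 + 1 = 2 * H - 1 by ring, neg_sub] at h
  refine ⟨4 / (2 * H - 1), by positivity, bound, fun ε hε => ?_⟩
  have bound_tendsto : Tendsto (fun m : ℝ => 4 / (2 * H - 1) * m ^ (1 - 2 * H)) atTop (𝓝 0) := by
    simpa only [neg_sub, mul_zero] using (tendsto_rpow_neg_atTop hq).const_mul (4 / (2 * H - 1))
  obtain ⟨M, hM⟩ := eventually_atTop.1 (bound_tendsto.eventually_le_const hε)
  exact ⟨M, fun m hMm hm a b hab c d => (bound m hm a b hab c d).trans (hM m hMm)⟩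

/-- For `H ∈ (1/2,1)` there is a constant `C` depending only on `H` such that for every
`n ≥ 1`, `sup_{τ∈[0,1], 1≤k≤n} |∫₀^τ (n∫_{(k−1)/n}^{k/n} |r−s|^{2H−2} dr − |(k−1)/n − s|^{2H−2}) ds|
≤ C n^{1−2H}`; in particular this supremum tends to `0` as `n → ∞`. -/
theorem stmt17 (H : ℝ) (hH : H ∈ Set.Ioo (1/2 : ℝ) 1) :
    ∃ C : ℝ, 0 < C ∧
      (∀ n : ℕ, 1 ≤ n → ∀ k : ℕ, 1 ≤ k → k ≤ n → ∀ τ ∈ Set.Icc (0:ℝ) 1,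
        |∫ s in (0:ℝ)..τ,
            ((n:ℝ) * (∫ r in (((k:ℝ) - 1) / n)..((k:ℝ) / n), |r - s| ^ (2 * H - 2))
              - |((k:ℝ) - 1) / n - s| ^ (2 * H - 2))|
          ≤ C * (n:ℝ) ^ (1 - 2 * H)) ∧
      (∀ ε > (0:ℝ), ∃ N : ℕ, ∀ n : ℕ, N ≤ n → 1 ≤ n → ∀ k : ℕ, 1 ≤ k → k ≤ n →
        ∀ τ ∈ Set.Icc (0:ℝ) 1,
        |∫ s in (0:ℝ)..τ,
            ((n:ℝ) * (∫ r in (((k:ℝ) - 1) / n)..((k:ℝ) / n), |r - s| ^ (2 * H - 2))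
              - |((k:ℝ) - 1) / n - s| ^ (2 * H - 2))| ≤ ε) := by
  obtain ⟨C, hC, bound, small⟩ := stmt17_general ⟨hH.1, hH.2.le⟩
  exact ⟨C, hC, fun n hn k _ _ τ _ => bound n (by positivity) _ _ (by ring) 0 τ, fun ε hε =>
    (small ε hε).elim fun M hM => ⟨⌈M⌉₊, fun n hMn hn k _ _ τ _ =>
      hM n (Nat.ceil_le.1 hMn) (by positivity) _ _ (by ring) 0 τ⟩⟩
end

section
/- Let H ∈ (1/2, 3/4). Then lim_{n→∞} n^{1−2H} Σ_{1 ≤ i < h ≤ n} | ρ_H(i) · ρ_H(h) · ρ_H(i−h) | = 0. -/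
open Filter

/-- The fBm autocorrelation sequence `ρ_H(k) = (1/2)(|k+1|^{2H} − 2|k|^{2H} + |k−1|^{2H})`. -/
noncomputable def rhoH (H : ℝ) (k : ℤ) : ℝ :=
  (1/2) * (|(k:ℝ) + 1| ^ (2 * H) - 2 * |(k:ℝ)| ^ (2 * H) + |(k:ℝ) - 1| ^ (2 * H))

/-!
The second difference of `x ↦ |x| ^ (2H)` gives `|ρ_H(k)| ≤ (2H-1) |k| ^ (2H-2)` for `k ≠ 0`.
Writing `h = i + j`, the factor `h ^ (2H-2)` is at most `i ^ (H-1) * j ^ (H-1)`, which decouples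
the double sum: it is at most a constant times `(∑ i ≤ n, i ^ (3H-3)) ^ 2`. It remains to see that
`n ^ (1/2-H) * ∑ i ≤ n, i ^ (3H-3)` tends to `0`, which by Kronecker's lemma follows from the
summability of `i ^ (2H-5/2)`, and this is exactly the condition `H < 3/4`.
-/

section SecondDifference

variable {p t : ℝ}

lemma rpow_one_add_le_one_add_mul_one_add_mul (hp : p ∈ Set.Icc 1 2) (ht : -1 ≤ t) :
    (1 + t) ^ p ≤ (1 + t) * (1 + (p - 1) * t) := by
  have hbase : 0 ≤ 1 + t := by linarith
  have hfactor : (1 + t) ^ p = (1 + t) * (1 + t) ^ (p - 1) := by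
    rw [← Real.rpow_one_add' hbase (by linarith [hp.1]), add_sub_cancel]
  have hbernoulli : (1 + t) ^ (p - 1) ≤ 1 + (p - 1) * t :=
    rpow_one_add_le_one_add_mul_self ht (by linarith [hp.1]) (by linarith [hp.2])
  rw [hfactor]
  gcongr

lemma abs_rpow_one_add_add_rpow_one_sub_sub_two_le (hp : p ∈ Set.Icc 1 2) (ht : |t| ≤ 1) :
    |(1 + t) ^ p + (1 - t) ^ p - 2| ≤ 2 * (p - 1) * t ^ 2 := by
  obtain ⟨ht_lower, ht_upper⟩ := abs_le.mp ht
  have hneg : -1 ≤ -t := neg_le_neg ht_upper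
  have lower_pos := one_add_mul_self_le_rpow_one_add ht_lower hp.1
  have lower_neg := one_add_mul_self_le_rpow_one_add hneg hp.1
  have upper_pos := rpow_one_add_le_one_add_mul_one_add_mul hp ht_lower
  have upper_neg := rpow_one_add_le_one_add_mul_one_add_mul hp hneg
  rw [← sub_eq_add_neg] at lower_neg upper_neg
  rw [abs_of_nonneg (by linarith)]
  linarith

end SecondDifference

lemma abs_inv_intCast_le_one (k : ℤ) : |(k : ℝ)⁻¹| ≤ 1 := by
  obtain rfl | hk := eq_or_ne k 0
  · simp
  · rw [abs_inv]
    exact inv_le_one_of_one_le₀ (mod_cast Int.one_le_abs hk)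

lemma rhoH_eq_abs_rpow_mul (H : ℝ) {k : ℤ} (hk : k ≠ 0) :
    rhoH H k = |(k : ℝ)| ^ (2 * H) *
      (((1 + (k : ℝ)⁻¹) ^ (2 * H) + (1 - (k : ℝ)⁻¹) ^ (2 * H) - 2) / 2) := by
  have hk' : (k : ℝ) ≠ 0 := Int.cast_ne_zero.mpr hk
  have hinv := abs_le.mp (abs_inv_intCast_le_one k)
  have hadd : 0 ≤ 1 + (k : ℝ)⁻¹ := by linarith
  have hsub : 0 ≤ 1 - (k : ℝ)⁻¹ := by linarith
  have habs_add : |(k : ℝ) + 1| = |(k : ℝ)| * (1 + (k : ℝ)⁻¹) := by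
    rw [← abs_of_nonneg hadd, ← abs_mul, mul_add, mul_one, mul_inv_cancel₀ hk']
  have habs_sub : |(k : ℝ) - 1| = |(k : ℝ)| * (1 - (k : ℝ)⁻¹) := by
    rw [← abs_of_nonneg hsub, ← abs_mul, mul_sub, mul_one, mul_inv_cancel₀ hk']
  rw [rhoH, habs_add, habs_sub, Real.mul_rpow (abs_nonneg _) hadd,
    Real.mul_rpow (abs_nonneg _) hsub]
  ring

lemma abs_rhoH_le {H : ℝ} (hH : H ∈ Set.Icc (1 / 2) 1) {k : ℤ} (hk : k ≠ 0) :
    |rhoH H k| ≤ (2 * H - 1) * |(k : ℝ)| ^ (2 * H - 2) := by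
  have hk' : 0 < |(k : ℝ)| := abs_pos.mpr (Int.cast_ne_zero.mpr hk)
  have hp : 2 * H ∈ Set.Icc 1 2 := ⟨by linarith [hH.1], by linarith [hH.2]⟩
  have hdiff := abs_rpow_one_add_add_rpow_one_sub_sub_two_le hp (abs_inv_intCast_le_one k)
  rw [rhoH_eq_abs_rpow_mul H hk, abs_mul, abs_div, abs_two, abs_of_nonneg (by positivity)]
  calc |(k : ℝ)| ^ (2 * H) * (|(1 + (k : ℝ)⁻¹) ^ (2 * H) + (1 - (k : ℝ)⁻¹) ^ (2 * H) - 2| / 2)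
      ≤ |(k : ℝ)| ^ (2 * H) * (2 * (2 * H - 1) * (k : ℝ)⁻¹ ^ 2 / 2) := by gcongr
    _ = (2 * H - 1) * |(k : ℝ)| ^ (2 * H - 2) := by
      rw [Real.rpow_sub hk', Real.rpow_two, sq_abs]
      ring

lemma sum_Icc_sum_Ico_mul_sub_le_sum_mul_sum {R : Type*} [Semiring R] [PartialOrder R]
    [IsOrderedRing R] {f g : ℕ → R} (hf : ∀ i, 0 ≤ f i) (hg : ∀ i, 0 ≤ g i) (n : ℕ) :
    ∑ h ∈ Finset.Icc 1 n, ∑ i ∈ Finset.Ico 1 h, f i * g (h - i) ≤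
      (∑ i ∈ Finset.Icc 1 n, f i) * ∑ j ∈ Finset.Icc 1 n, g j := by
  calc ∑ h ∈ Finset.Icc 1 n, ∑ i ∈ Finset.Ico 1 h, f i * g (h - i)
      = ∑ i ∈ Finset.Icc 1 n, ∑ j ∈ Finset.Icc 1 (n - i), f i * g j := by
        rw [Finset.sum_sigma', Finset.sum_sigma']
        refine Finset.sum_nbij' (fun x ↦ ⟨x.2, x.1 - x.2⟩) (fun x ↦ ⟨x.1 + x.2, x.1⟩)
          ?_ ?_ ?_ ?_ ?_ <;> grind
    _ ≤ ∑ i ∈ Finset.Icc 1 n, ∑ j ∈ Finset.Icc 1 n, f i * g j := by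
        gcongr with i
        · exact fun j _ _ ↦ mul_nonneg (hf i) (hg j)
        · exact Nat.sub_le n i
    _ = (∑ i ∈ Finset.Icc 1 n, f i) * ∑ j ∈ Finset.Icc 1 n, g j :=
        (Finset.sum_mul_sum _ _ _ _).symm

lemma add_rpow_two_mul_le_mul_rpow {x y a : ℝ} (hx : 0 < x) (hy : 0 < y) (ha : a ≤ 0) :
    (x + y) ^ (2 * a) ≤ x ^ a * y ^ a := by
  rw [two_mul, Real.rpow_add (add_pos hx hy)]
  exact mul_le_mul
    (Real.rpow_le_rpow_of_nonpos hx (le_add_of_nonneg_right hy.le) ha)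
    (Real.rpow_le_rpow_of_nonpos hy (le_add_of_nonneg_left hx.le) ha)
    (by positivity) (by positivity)

section PowerDecay

variable {r : ℤ → ℝ} {C a : ℝ}

lemma abs_mul_mul_le_of_abs_le_rpow (ha : a ≤ 0)
    (hr : ∀ k : ℤ, k ≠ 0 → |r k| ≤ C * |(k : ℝ)| ^ (2 * a)) {i h : ℕ} (hi : 0 < i) (hih : i < h) :
    |r i * r h * r ((i : ℤ) - h)| ≤
      C ^ 3 * ((i : ℝ) ^ (3 * a) * ((h - i : ℕ) : ℝ) ^ (3 * a)) := by
  obtain ⟨j, rfl⟩ := Nat.exists_eq_add_of_le hih.le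
  have hj : 0 < j := by lia
  have hi' : (0 : ℝ) < i := Nat.cast_pos.mpr hi
  have hj' : (0 : ℝ) < j := Nat.cast_pos.mpr hj
  have hC : 0 ≤ C := by simpa using (abs_nonneg _).trans (hr 1 one_ne_zero)
  have hr_i : |r i| ≤ C * (i : ℝ) ^ (2 * a) := by
    simpa using hr i (mod_cast hi.ne')
  have hr_add : |r (i + j : ℕ)| ≤ C * ((i : ℝ) ^ a * (j : ℝ) ^ a) := by
    calc |r (i + j : ℕ)| ≤ C * ((i : ℝ) + j) ^ (2 * a) := by
          simpa [abs_of_pos (add_pos hi' hj')] using hr (i + j : ℕ) (by lia)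
      _ ≤ C * ((i : ℝ) ^ a * (j : ℝ) ^ a) := by
          gcongr
          exact add_rpow_two_mul_le_mul_rpow hi' hj' ha
  have hr_neg : |r ((i : ℤ) - (i + j : ℕ))| ≤ C * (j : ℝ) ^ (2 * a) := by
    simpa using hr ((i : ℤ) - (i + j : ℕ)) (by lia)
  have hthree {x : ℝ} (hx : 0 < x) : x ^ (3 * a) = x ^ (2 * a) * x ^ a := by
    rw [← Real.rpow_add hx]
    ring_nf
  calc |r i * r (i + j : ℕ) * r ((i : ℤ) - (i + j : ℕ))|
      = |r i| * |r (i + j : ℕ)| * |r ((i : ℤ) - (i + j : ℕ))| := by rw [abs_mul, abs_mul]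
    _ ≤ C * (i : ℝ) ^ (2 * a) * (C * ((i : ℝ) ^ a * (j : ℝ) ^ a)) * (C * (j : ℝ) ^ (2 * a)) := by
        gcongr
    _ = C ^ 3 * ((i : ℝ) ^ (3 * a) * ((i + j - i : ℕ) : ℝ) ^ (3 * a)) := by
        rw [Nat.add_sub_cancel_left, hthree hi', hthree hj']
        ring

lemma sum_abs_mul_mul_le_of_abs_le_rpow (ha : a ≤ 0)
    (hr : ∀ k : ℤ, k ≠ 0 → |r k| ≤ C * |(k : ℝ)| ^ (2 * a)) (n : ℕ) :
    ∑ h ∈ Finset.Icc 1 n, ∑ i ∈ Finset.Ico 1 h, |r i * r h * r ((i : ℤ) - h)| ≤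
      C ^ 3 * (∑ i ∈ Finset.Icc 1 n, (i : ℝ) ^ (3 * a)) ^ 2 := by
  have hC : 0 ≤ C := by simpa using (abs_nonneg _).trans (hr 1 one_ne_zero)
  have hpow (i : ℕ) : 0 ≤ (i : ℝ) ^ (3 * a) := by positivity
  calc ∑ h ∈ Finset.Icc 1 n, ∑ i ∈ Finset.Ico 1 h, |r i * r h * r ((i : ℤ) - h)|
      ≤ ∑ h ∈ Finset.Icc 1 n, ∑ i ∈ Finset.Ico 1 h,
          C ^ 3 * ((i : ℝ) ^ (3 * a) * ((h - i : ℕ) : ℝ) ^ (3 * a)) := by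
        gcongr with h _ i hi
        obtain ⟨hi_pos, hih⟩ := Finset.mem_Ico.mp hi
        exact abs_mul_mul_le_of_abs_le_rpow ha hr hi_pos hih
    _ = C ^ 3 * ∑ h ∈ Finset.Icc 1 n, ∑ i ∈ Finset.Ico 1 h,
          (i : ℝ) ^ (3 * a) * ((h - i : ℕ) : ℝ) ^ (3 * a) := by
        simp only [Finset.mul_sum]
    _ ≤ C ^ 3 * (∑ i ∈ Finset.Icc 1 n, (i : ℝ) ^ (3 * a)) ^ 2 := by
        rw [sq (Finset.sum _ _)]
        gcongr
        exact sum_Icc_sum_Ico_mul_sub_le_sum_mul_sum hpow hpow n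

end PowerDecay

lemma tendsto_inv_smul_sum_Icc_smul_of_summable_norm {E : Type*} [NormedAddCommGroup E]
    [NormedSpace ℝ E] [CompleteSpace E] {b : ℕ → ℝ} {x : ℕ → E} (hb_nonneg : ∀ n, 0 ≤ b n)
    (hb_mono : Monotone b) (hb : Tendsto b atTop atTop) (hx : Summable fun i ↦ ‖x i‖) (m : ℕ) :
    Tendsto (fun n ↦ (b n)⁻¹ • ∑ i ∈ Finset.Icc m n, b i • x i) atTop (nhds 0) := by
  let summand (n i : ℕ) : E := if i ∈ Finset.Icc m n then (b n)⁻¹ • b i • x i else 0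
  have hsummand_sum (n : ℕ) : ∑' i, summand n i = (b n)⁻¹ • ∑ i ∈ Finset.Icc m n, b i • x i := by
    rw [tsum_eq_sum fun i hi ↦ if_neg hi, Finset.smul_sum]
    exact Finset.sum_congr rfl fun i hi ↦ if_pos hi
  have hsummand_norm (n i : ℕ) : ‖summand n i‖ ≤ (b n)⁻¹ * (b i * ‖x i‖) := by
    have hbn := hb_nonneg n
    have hbi := hb_nonneg i
    simp only [summand]
    split_ifs
    · rw [norm_smul, norm_smul, norm_inv, Real.norm_of_nonneg hbn, Real.norm_of_nonneg hbi]
    · rw [norm_zero]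
      positivity
  have hsummand_le (n i : ℕ) : ‖summand n i‖ ≤ ‖x i‖ := by
    by_cases hi : i ∈ Finset.Icc m n
    · calc ‖summand n i‖ ≤ (b n)⁻¹ * (b i * ‖x i‖) := hsummand_norm n i
        _ = b i / b n * ‖x i‖ := by ring
        _ ≤ ‖x i‖ := mul_le_of_le_one_left (norm_nonneg _) <|
            div_le_one_of_le₀ (hb_mono (Finset.mem_Icc.mp hi).2) (hb_nonneg n)
    · simp only [summand, if_neg hi, norm_zero, norm_nonneg]
  have hsummand_tendsto (i : ℕ) : Tendsto (summand · i) atTop (nhds 0) :=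
    squeeze_zero_norm (hsummand_norm · i) <| by
      simpa only [zero_mul, Pi.inv_apply] using hb.inv_tendsto_atTop.mul_const (b i * ‖x i‖)
  simpa only [hsummand_sum, tsum_zero] using
    tendsto_tsum_of_dominated_convergence hx hsummand_tendsto (Eventually.of_forall hsummand_le)

lemma tendsto_rpow_neg_mul_sum_Icc_rpow {a c : ℝ} (hc : 0 < c) (hac : a < c - 1) :
    Tendsto (fun n : ℕ ↦ (n : ℝ) ^ (-c) * ∑ i ∈ Finset.Icc 1 n, (i : ℝ) ^ a) atTop (nhds 0) := by
  have hweight_mono : Monotone fun n : ℕ ↦ (n : ℝ) ^ c := fun m n hmn ↦ by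
    dsimp only
    gcongr
  have hweight_tendsto : Tendsto (fun n : ℕ ↦ (n : ℝ) ^ c) atTop atTop :=
    (tendsto_rpow_atTop hc).comp tendsto_natCast_atTop_atTop
  have hsummable : Summable fun i : ℕ ↦ ‖(i : ℝ) ^ (a - c)‖ :=
    (Real.summable_nat_rpow.mpr (by linarith)).norm
  refine (tendsto_inv_smul_sum_Icc_smul_of_summable_norm (fun n ↦ by positivity) hweight_mono
    hweight_tendsto hsummable 1).congr fun n ↦ ?_
  rw [smul_eq_mul, Real.rpow_neg n.cast_nonneg]
  congr 1
  refine Finset.sum_congr rfl fun i hi ↦ ?_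
  have hi_pos : (0 : ℝ) < i := Nat.cast_pos.mpr (Finset.mem_Icc.mp hi).1
  rw [smul_eq_mul, ← Real.rpow_add hi_pos, add_sub_cancel]

/-- For `H ∈ (1/2,3/4)`,
`n^{1−2H} Σ_{1≤i<h≤n} |ρ_H(i)ρ_H(h)ρ_H(i−h)| → 0` as `n → ∞`. -/
theorem stmt19 (H : ℝ) (hH : H ∈ Set.Ioo (1/2 : ℝ) (3/4)) :
    Tendsto
      (fun n : ℕ => (n:ℝ) ^ (1 - 2 * H) *
        ∑ h ∈ Finset.Icc 1 n, ∑ i ∈ Finset.Ico 1 h,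
          |rhoH H (i:ℤ) * rhoH H (h:ℤ) * rhoH H ((i:ℤ) - (h:ℤ))|)
      atTop (nhds 0) := by
  obtain ⟨hH_lower, hH_upper⟩ := hH
  have hdecay (k : ℤ) (hk : k ≠ 0) : |rhoH H k| ≤ (2 * H - 1) * |(k : ℝ)| ^ (2 * (H - 1)) := by
    rw [mul_sub, mul_one]
    exact abs_rhoH_le ⟨hH_lower.le, by linarith⟩ hk
  have hlim : Tendsto (fun n : ℕ ↦ (2 * H - 1) ^ 3 *
      ((n : ℝ) ^ (-(H - 1 / 2)) * ∑ i ∈ Finset.Icc 1 n, (i : ℝ) ^ (3 * (H - 1))) ^ 2)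
      atTop (nhds 0) := by
    simpa using ((tendsto_rpow_neg_mul_sum_Icc_rpow (a := 3 * (H - 1)) (c := H - 1 / 2)
      (by linarith) (by linarith)).pow 2).const_mul ((2 * H - 1) ^ 3)
  refine squeeze_zero (fun n ↦ by positivity) (fun n ↦ ?_) hlim
  have hsq : (n : ℝ) ^ (1 - 2 * H) = ((n : ℝ) ^ (-(H - 1 / 2))) ^ 2 := by
    rw [← Real.rpow_mul_natCast n.cast_nonneg]
    ring_nf
  rw [hsq, mul_pow, mul_left_comm]
  gcongr
  exact sum_abs_mul_mul_le_of_abs_le_rpow (by linarith) hdecay n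
end
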